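/- arXiv:2212.11019 — 4 statements merged into one kernel-verified Lean document; each statement's English description precedes it below -/
import Mathlib

section
/- Let d and N be positive integers with N odd. Then, in ℤ, 2·d² divides (N+1) · ( (d−1)^N · (7·d²·N − 7·d² − 2·d·N − 2) + 2·(d² − 1) ). -/
/-- For odd exponents, the binomial expansion of `(x - 1) ^ N` modulo `x ^ 2` is `N * x - 1`. -/
lemma sub_one_pow_odd_mod_sq (x : ℤ) (m : ℕ) :
    ∃ c : ℤ, (x - 1) ^ (2 * m + 1) = (2 * (m : ℤ) + 1) * x - 1 + x ^ 2 * c := by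
  induction m with
  | zero => exact ⟨0, by simp⟩
  | succ m ih =>
    obtain ⟨c, hc⟩ := ih
    refine ⟨c * (x - 1) ^ 2 - 1 + (2 * (m : ℤ) + 1) * (x - 2), ?_⟩
    rw [show 2 * (m + 1) + 1 = (2 * m + 1) + 2 by ring, pow_add, hc]
    push_cast
    ring

theorem stmt_11 (d N : ℕ) (hd : 0 < d) (hN : 0 < N) (hodd : Odd N) :
    (2 * (d : ℤ) ^ 2) ∣
      ((N : ℤ) + 1) *
        (((d : ℤ) - 1) ^ N *
            (7 * (d : ℤ) ^ 2 * (N : ℤ) - 7 * (d : ℤ) ^ 2 - 2 * (d : ℤ) * (N : ℤ) - 2) +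
          2 * ((d : ℤ) ^ 2 - 1)) := by
  obtain ⟨m, rfl⟩ := hodd
  obtain ⟨c, hc⟩ := sub_one_pow_odd_mod_sq d m
  rw [hc]
  push_cast
  -- The factor 2 comes from `N + 1 = 2 * (m + 1)`. Modulo `d ^ 2` the other factor is
  -- `(N * d - 1) * (-2 * (N * d + 1)) - 2 = -2 * N ^ 2 * d ^ 2`, hence vanishes;
  -- the witness is the full quotient.
  refine ⟨((m : ℤ) + 1) * (7 * ((2 * (m : ℤ) + 1) * d - 1 + d ^ 2 * c) * (2 * m)
    - 2 * (2 * (m : ℤ) + 1) ^ 2 - 2 * c * (d * (2 * (m : ℤ) + 1) + 1) + 2), ?_⟩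
  ring
end

section
/- Let d and N be positive integers with N odd. Then, in ℤ, 2·d² divides (N+1) · ( (d−1)^N · (−5·d²·N + 5·d² − 2·d·N − 2) + 2·(d² − 1) ). -/
/-!
Since `N` is odd, the factor `N + 1` supplies the factor `2`, so it suffices that `d ^ 2` divides
the bracket. Modulo `d ^ 2` one has `(d - 1) ^ N ≡ N * d - 1` by the binomial theorem
(`sub_one_pow_odd`), and the bracket becomes `-(N * d - 1) * 2 * (N * d + 1) - 2 ≡ 0`.
-/

/-- The binomial expansion of `(x - 1) ^ N` for odd `N`, truncated modulo `x ^ 2`. -/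
lemma sub_one_pow_odd (x : ℤ) (m : ℕ) :
    ∃ c : ℤ, (x - 1) ^ (2 * m + 1) = (2 * m + 1) * x - 1 + x ^ 2 * c := by
  induction m with
  | zero => exact ⟨0, by simp⟩
  | succ k ih =>
    obtain ⟨c, hc⟩ := ih
    refine ⟨(2 * k + 1) * (x - 2) - 1 + c * (x - 1) ^ 2, ?_⟩
    rw [show 2 * (k + 1) + 1 = (2 * k + 1) + 2 by ring, pow_add, hc]
    push_cast
    ring

theorem stmt_12 (d N : ℕ) (hd : 0 < d) (hN : 0 < N) (hodd : Odd N) :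
    (2 * (d : ℤ) ^ 2) ∣
      ((N : ℤ) + 1) *
        (((d : ℤ) - 1) ^ N *
            (-5 * (d : ℤ) ^ 2 * (N : ℤ) + 5 * (d : ℤ) ^ 2 - 2 * (d : ℤ) * (N : ℤ) - 2) +
          2 * ((d : ℤ) ^ 2 - 1)) := by
  obtain ⟨m, rfl⟩ := hodd
  obtain ⟨c, hc⟩ := sub_one_pow_odd d m
  rw [hc]
  push_cast
  apply mul_dvd_mul
  · exact ⟨m + 1, by ring⟩
  · generalize (d : ℤ) = x
    generalize hn : (2 * (m : ℤ) + 1) = n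
    exact ⟨(n * x - 1) * (5 - 5 * n) - 2 * n ^ 2 + 2
      + c * (-5 * x ^ 2 * n + 5 * x ^ 2 - 2 * x * n - 2), by ring⟩
end

section
/- Let d and N be positive integers with N odd. Then, in ℤ, 2·d² divides (N+1) · ( (d−1)^N · (d²·N − d² − 2·d·N − 2) + 2·(d² − 1) ). -/
/-!
Since `N` is odd, `2 ∣ N + 1`, so it suffices that `d ^ 2` divides the second factor. Modulo `d ^ 2`
the binomial expansion gives `(d - 1) ^ N ≡ N d - 1`, and the second factor becomes
`(N d - 1) (-2 d N - 2) - 2 = -2 (N ^ 2 d ^ 2 - 1) - 2 ≡ 0`.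
-/

/-- The binomial expansion of `(d - 1) ^ n` modulo `d ^ 2` for odd `n = 2 * k + 1`. -/
lemma sub_one_pow_odd_expansion (d : ℤ) (k : ℕ) :
    ∃ c : ℤ, (d - 1) ^ (2 * k + 1) = d ^ 2 * c + (2 * (k : ℤ) + 1) * d - 1 := by
  induction k with
  | zero => exact ⟨0, by simp⟩
  | succ k ih =>
    obtain ⟨c, hc⟩ := ih
    refine ⟨c * (d - 1) ^ 2 + ((2 * (k : ℤ) + 1) * d - 1) - 2 * (2 * (k : ℤ) + 1), ?_⟩
    rw [show 2 * (k + 1) + 1 = (2 * k + 1) + 2 by ring, pow_add, hc]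
    push_cast
    ring

theorem stmt_13 (d N : ℕ) (hd : 0 < d) (hN : 0 < N) (hodd : Odd N) :
    (2 * (d : ℤ) ^ 2) ∣
      ((N : ℤ) + 1) *
        (((d : ℤ) - 1) ^ N *
            ((d : ℤ) ^ 2 * (N : ℤ) - (d : ℤ) ^ 2 - 2 * (d : ℤ) * (N : ℤ) - 2) +
          2 * ((d : ℤ) ^ 2 - 1)) := by
  obtain ⟨k, rfl⟩ := hodd
  obtain ⟨c, hc⟩ := sub_one_pow_odd_expansion d k
  rw [hc]
  push_cast
  refine mul_dvd_mul ⟨(k : ℤ) + 1, by ring⟩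
    ⟨((d : ℤ) ^ 2 * c + (2 * (k : ℤ) + 1) * d - 1) * (2 * k)
      + c * (-2 * d * (2 * k + 1) - 2) - 2 * (2 * k + 1) ^ 2 + 2, by ring⟩
end

section
/- Let d and N be positive integers with N even. Then, in ℤ, 2·d² divides (N+1) · ( (d−1)^N · (d²·N + 2·d² − 2·d·N − 2) − 2·(d² − 1) ). -/
/-- The first-order binomial expansion of `(1 - d) ^ (2 * m)` modulo `d ^ 2`. -/
theorem sub_one_pow_two_mul_expansion (d : ℤ) (m : ℕ) :
    ∃ k : ℤ, (d - 1) ^ (2 * m) = 1 - 2 * m * d + d ^ 2 * k := by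
  induction m with
  | zero => exact ⟨0, by simp⟩
  | succ m ih =>
    obtain ⟨k, hk⟩ := ih
    refine ⟨1 + 4 * m - 2 * m * d + k * (1 - 2 * d + d ^ 2), ?_⟩
    rw [mul_add, pow_add, hk]
    push_cast
    ring

theorem stmt_14 (d N : ℕ) (hd : 0 < d) (hN : 0 < N) (heven : Even N) :
    (2 * (d : ℤ) ^ 2) ∣
      ((N : ℤ) + 1) *
        (((d : ℤ) - 1) ^ N *
            ((d : ℤ) ^ 2 * (N : ℤ) + 2 * (d : ℤ) ^ 2 - 2 * (d : ℤ) * (N : ℤ) - 2) -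
          2 * ((d : ℤ) ^ 2 - 1)) := by
  obtain ⟨m, rfl⟩ := heven.two_dvd
  obtain ⟨k, hk⟩ := sub_one_pow_two_mul_expansion (d : ℤ) m
  rw [hk]
  apply Dvd.dvd.mul_left
  -- Modulo `2 * d ^ 2` the second factor is `-2 * (1 + N * d)` since `N` is even, so the
  -- product reduces to `-2 * (1 - N ^ 2 * d ^ 2)`, which cancels against `+ 2`.
  refine ⟨(1 - 2 * m * d) * (m + 1) + k * (d ^ 2 * (m + 1) - 2 * d * m - 1) + 4 * m ^ 2 - 1, ?_⟩
  push_cast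
  ring
end
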